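/- arXiv:2507.01969 — 8 statements merged into one kernel-verified Lean document; each statement's English description precedes it below -/
import Mathlib

section
/- Let Γ_A = (A, α), Γ_B = (B, β) and Γ_C = (C, γ) be cooperative games on pairwise disjoint finite player sets, let i ∈ A and j ∈ B. Then the sequential axiom holds for the partial composition of games: (Γ_A ∘_i Γ_B) ∘_j Γ_C = Γ_A ∘_i (Γ_B ∘_j Γ_C); that is, both composite games have the same player set ((A ∖ {i}) ∪ (B ∖ {j})) ∪ C and their coalition functions agree on every subset of it. -/
open Finset

/-- The discrete derivative of a coalition function `v` at player `i`:
`∂ᵢ v (S) = v (S ∪ {i}) − v (S ∖ {i})`. -/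
noncomputable def gameDeriv {ι : Type*} [DecidableEq ι]
    (v : Finset ι → ℝ) (i : ι) (S : Finset ι) : ℝ :=
  v (insert i S) - v (S.erase i)

/-- The coalition function of the partial composition `Γ_A ∘ᵢ Γ_B` of the game `(A, α)`
with the game `(B, β)` at player `i ∈ A`:
`(α ∘ᵢ β)(S) = β(B)·α(S ∩ A) + ∂ᵢα(S ∩ A)·β(S ∩ B)`. -/
noncomputable def gameComp {ι : Type*} [DecidableEq ι]
    (A B : Finset ι) (i : ι) (α β : Finset ι → ℝ) (S : Finset ι) : ℝ :=
  β B * α (S ∩ A) + gameDeriv α i (S ∩ A) * β (S ∩ B)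

/-!
Differentiating the composite `α ∘ᵢ β` at a player `j` of `B` only sees the factor `β`, so
`∂ⱼ(α ∘ᵢ β) = ∂ᵢα · ∂ⱼβ`; and the grand coalition of `Γ_B ∘ⱼ Γ_C` is worth `β(B) γ(C)`.
Hence both composites take the value
`γ(C) β(B) α(S_A) + γ(C) ∂ᵢα(S_A) β(S_B) + ∂ᵢα(S_A) ∂ⱼβ(S_B) γ(S_C)` at `S`.
-/

section

variable {ι : Type*} [DecidableEq ι] {A B C S T : Finset ι} {i j : ι}

lemma erase_union_of_notMem_left (hjA : j ∉ A) : (A ∪ B).erase j = A ∪ B.erase j := by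
  rw [erase_union_distrib, erase_eq_of_notMem hjA]

lemma inter_inter_eq_of_inter_subset (h : S ∩ A ⊆ T) : S ∩ T ∩ A = S ∩ A := by
  rw [inter_right_comm, inter_eq_left.2 h]

variable (α β γ : Finset ι → ℝ)

lemma gameComp_inter (hA : S ∩ A ⊆ T) (hB : S ∩ B ⊆ T) :
    gameComp A B i α β (S ∩ T) = gameComp A B i α β S := by
  rw [gameComp, gameComp, inter_inter_eq_of_inter_subset hA, inter_inter_eq_of_inter_subset hB]

lemma gameDeriv_gameComp_s0 (hjA : j ∉ A) (hjB : j ∈ B) (S : Finset ι) :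
    gameDeriv (gameComp A B i α β) j S =
      gameDeriv α i (S ∩ A) * gameDeriv β j (S ∩ B) := by
  have insert_inter_A : insert j S ∩ A = S ∩ A := insert_inter_of_notMem hjA
  have insert_inter_B : insert j S ∩ B = insert j (S ∩ B) := insert_inter_of_mem hjB
  have erase_inter_A : S.erase j ∩ A = S ∩ A := by
    rw [erase_inter, erase_eq_of_notMem (fun hj => hjA (mem_of_mem_inter_right hj))]
  have erase_inter_B : S.erase j ∩ B = (S ∩ B).erase j := erase_inter j S B
  simp only [gameDeriv, gameComp, insert_inter_A, insert_inter_B, erase_inter_A, erase_inter_B]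
  ring

lemma gameComp_erase_union (hjB : j ∈ B) (hjC : j ∉ C) :
    gameComp B C j β γ (B.erase j ∪ C) = γ C * β B := by
  have players_inter_B : (B.erase j ∪ C) ∩ B = B.erase j := by grind
  have deriv_erase : gameDeriv β j (B.erase j) = β B - β (B.erase j) := by
    rw [gameDeriv, insert_erase hjB, erase_idem]
  rw [gameComp, players_inter_B, union_inter_cancel_right, deriv_erase]
  ring

theorem sequential_axiom_general (hiC : i ∉ C) (hjA : j ∉ A) (hjB : j ∈ B) (hjC : j ∉ C) :
    ((A.erase i ∪ B).erase j ∪ C = A.erase i ∪ (B.erase j ∪ C)) ∧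
    (∀ S ⊆ (A.erase i ∪ B).erase j ∪ C,
      gameComp (A.erase i ∪ B) C j (gameComp A B i α β) γ S =
        gameComp A (B.erase j ∪ C) i α (gameComp B C j β γ) S) := by
  have hjA' : j ∉ A.erase i := fun hj => hjA (mem_of_mem_erase hj)
  refine ⟨by rw [erase_union_of_notMem_left hjA', union_assoc], fun S hS => ?_⟩
  have hSA : S ∩ A ⊆ A.erase i ∪ B := by grind
  have hSB : S ∩ B ⊆ A.erase i ∪ B := inter_subset_right.trans subset_union_right
  have hSB' : S ∩ B ⊆ B.erase j ∪ C := by grind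
  have hSC : S ∩ C ⊆ B.erase j ∪ C := inter_subset_right.trans subset_union_right
  calc gameComp (A.erase i ∪ B) C j (gameComp A B i α β) γ S
    _ = γ C * gameComp A B i α β S +
          gameDeriv α i (S ∩ A) * gameDeriv β j (S ∩ B) * γ (S ∩ C) := by
        rw [gameComp, gameComp_inter α β hSA hSB, gameDeriv_gameComp_s0 α β hjA hjB,
          inter_inter_eq_of_inter_subset hSA, inter_inter_eq_of_inter_subset hSB]
    _ = γ C * β B * α (S ∩ A) + gameDeriv α i (S ∩ A) * gameComp B C j β γ S := by
        rw [gameComp, gameComp]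
        ring
    _ = gameComp A (B.erase j ∪ C) i α (gameComp B C j β γ) S := by
        rw [← gameComp_erase_union β γ hjB hjC, ← gameComp_inter β γ hSB' hSC]
        rfl

end

/-- The sequential axiom for the partial composition of cooperative games:
`(Γ_A ∘ᵢ Γ_B) ∘ⱼ Γ_C = Γ_A ∘ᵢ (Γ_B ∘ⱼ Γ_C)` for `i ∈ A`, `j ∈ B`. -/
theorem sequential_axiom {ι : Type*} [DecidableEq ι]
    (A B C : Finset ι) (α β γ : Finset ι → ℝ)
    (hAB : Disjoint A B) (hAC : Disjoint A C) (hBC : Disjoint B C)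
    (hα0 : α ∅ = 0) (hβ0 : β ∅ = 0) (hγ0 : γ ∅ = 0)
    (i : ι) (hi : i ∈ A) (j : ι) (hj : j ∈ B) :
    ((A.erase i ∪ B).erase j ∪ C = A.erase i ∪ (B.erase j ∪ C)) ∧
    (∀ S ⊆ (A.erase i ∪ B).erase j ∪ C,
      gameComp (A.erase i ∪ B) C j (gameComp A B i α β) γ S =
        gameComp A (B.erase j ∪ C) i α (gameComp B C j β γ) S) :=
  sequential_axiom_general α β γ (disjoint_left.1 hAC hi) (disjoint_right.1 hAB hj) hj
    (disjoint_left.1 hBC hj)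
end

section
/- Let A and B be disjoint finite player sets, let i ∈ A, and let S ⊆ A and T ⊆ B be nonempty coalitions. Then the partial composition of the corresponding unanimity games is again a unanimity game: u_S ∘_i u_T = u_{S ⋄_i T}, where S ⋄_i T = (S ∖ {i}) ∪ T if i ∈ S, and S ⋄_i T = S if i ∉ S. -/
open Finset

/-- The unanimity game `u_S` : `u_S(T) = 1` if `S ⊆ T` and `0` otherwise. -/
noncomputable def unanimity {ι : Type*} [DecidableEq ι] (S : Finset ι) (T : Finset ι) : ℝ :=
  if S ⊆ T then 1 else 0

section Unanimity

variable {ι : Type*} [DecidableEq ι] {A B S T K : Finset ι} {i : ι}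

theorem unanimity_of_subset (h : S ⊆ K) : unanimity S K = 1 :=
  if_pos h

theorem unanimity_of_mem_of_notMem (hiS : i ∈ S) (hiK : i ∉ K) : unanimity S K = 0 :=
  if_neg fun h => hiK (h hiS)

theorem unanimity_union (S T K : Finset ι) :
    unanimity (S ∪ T) K = unanimity S K * unanimity T K := by
  simp only [unanimity, union_subset_iff, ite_and, ite_mul, one_mul, zero_mul]

theorem unanimity_inter_of_subset (hS : S ⊆ A) (K : Finset ι) :
    unanimity S (K ∩ A) = unanimity S K := by
  simp only [unanimity, subset_inter_iff, hS, and_true]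

theorem unanimity_insert (S K : Finset ι) (i : ι) :
    unanimity S (insert i K) = unanimity (S.erase i) K := by
  simp only [unanimity, subset_insert_iff]

theorem unanimity_erase_of_notMem (hiS : i ∉ S) (K : Finset ι) :
    unanimity S (K.erase i) = unanimity S K := by
  simp only [unanimity, subset_erase, hiS, not_false_eq_true, and_true]

theorem gameDeriv_unanimity_of_mem (hiS : i ∈ S) (K : Finset ι) :
    gameDeriv (unanimity S) i K = unanimity (S.erase i) K := by
  rw [gameDeriv, unanimity_insert, unanimity_of_mem_of_notMem hiS (notMem_erase i K), sub_zero]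

theorem gameDeriv_unanimity_of_notMem (hiS : i ∉ S) (K : Finset ι) :
    gameDeriv (unanimity S) i K = 0 := by
  rw [gameDeriv, unanimity_insert, erase_eq_of_notMem hiS, unanimity_erase_of_notMem hiS, sub_self]

theorem gameComp_unanimity_left_of_mem (hS : S ⊆ A) (hiS : i ∈ S) (hiK : i ∉ K)
    (β : Finset ι → ℝ) :
    gameComp A B i (unanimity S) β K = unanimity (S.erase i) K * β (K ∩ B) := by
  rw [gameComp, gameDeriv_unanimity_of_mem hiS, unanimity_inter_of_subset hS,
    unanimity_inter_of_subset ((erase_subset i S).trans hS),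
    unanimity_of_mem_of_notMem hiS hiK, mul_zero, zero_add]

theorem gameComp_unanimity_left_of_notMem (hS : S ⊆ A) (hiS : i ∉ S) (β : Finset ι → ℝ) :
    gameComp A B i (unanimity S) β K = β B * unanimity S K := by
  rw [gameComp, gameDeriv_unanimity_of_notMem hiS, unanimity_inter_of_subset hS,
    zero_mul, add_zero]

theorem unanimity_comp_general (hS : S ⊆ A) (hT : T ⊆ B) (hiK : i ∉ K) :
    gameComp A B i (unanimity S) (unanimity T) K =
      unanimity (if i ∈ S then S.erase i ∪ T else S) K := by
  split_ifs with hiS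
  · rw [gameComp_unanimity_left_of_mem hS hiS hiK, unanimity_inter_of_subset hT, unanimity_union]
  · rw [gameComp_unanimity_left_of_notMem hS hiS, unanimity_of_subset hT, one_mul]

end Unanimity

/-- The partial composition of unanimity games is a unanimity game:
`u_S ∘ᵢ u_T = u_{S ⋄ᵢ T}`, where `S ⋄ᵢ T = (S ∖ {i}) ∪ T` if `i ∈ S` and `S ⋄ᵢ T = S`
otherwise, as games on the composite player set `(A ∖ {i}) ∪ B`. -/
theorem unanimity_comp {ι : Type*} [DecidableEq ι]
    (A B : Finset ι) (hAB : Disjoint A B) (i : ι) (hi : i ∈ A)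
    (S T : Finset ι) (hS : S ⊆ A) (hT : T ⊆ B) (hSne : S.Nonempty) (hTne : T.Nonempty) :
    ∀ K ⊆ A.erase i ∪ B,
      gameComp A B i (unanimity S) (unanimity T) K =
        unanimity (if i ∈ S then S.erase i ∪ T else S) K := by
  exact fun K hK => unanimity_comp_general hS hT <|
    notMem_mono hK (notMem_union.2 ⟨notMem_erase i A, disjoint_left.1 hAB hi⟩)
end

section
/- Let Γ_A = (A, α) and Γ_B = (B, β) be cooperative games on disjoint finite player sets and let i ∈ A. Then the Möbius transform of the composite game Γ_A ∘_i Γ_B is given, for every nonempty coalition K ⊆ (A ∖ {i}) ∪ B, by: μ^{α ∘_i β}(K) = β(B) · μ^α(K) if K ∩ B = ∅, and μ^{α ∘_i β}(K) = μ^α((K ∩ A) ∪ {i}) · μ^β(K ∩ B) if K ∩ B ≠ ∅. (In other words, the Möbius transform intertwines the partial composition of games with the partial composition written in the basis of unanimity games.) -/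
open Finset

/-- The Möbius transform of a coalition function:
`μ^v(S) = Σ_{T ⊆ S} (−1)^{|S ∖ T|} v(T)`. -/
noncomputable def mobius {ι : Type*} [DecidableEq ι]
    (v : Finset ι → ℝ) (S : Finset ι) : ℝ :=
  ∑ T ∈ S.powerset, (-1 : ℝ) ^ (S.card - T.card) * v T

/-!
Since `μ^v(S ∪ {i}) = μ^{∂ᵢv}(S)` for `i ∉ S`, the Möbius transform at `K` is the iterated
derivative along the players of `K`, evaluated at `∅`. Differentiating a product
`f(S ∩ P) · g(S ∩ Q)` with `P`, `Q` disjoint affects only one factor at a time, so its transform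
factors as `μ^f(K ∩ P) · μ^g(K ∩ Q)`. The composite game is a sum of two such products,
`α · β(B)` and `∂ᵢα · β`. The transform of the constant `β(B)` vanishes off `∅` and that of `β`
vanishes at `∅`, so only one of the two summands survives, according to whether `K ∩ B` is empty.
-/

section Mobius

variable {ι : Type*} [DecidableEq ι]

theorem mobius_empty (v : Finset ι → ℝ) : mobius v ∅ = v ∅ := by
  simp [mobius]

theorem mobius_add (v w : Finset ι → ℝ) (S : Finset ι) :
    mobius (fun T => v T + w T) S = mobius v S + mobius w S := by
  simp only [mobius, mul_add, sum_add_distrib]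

theorem mobius_insert (v : Finset ι → ℝ) {i : ι} {S : Finset ι} (hi : i ∉ S) :
    mobius v (insert i S) = mobius (gameDeriv v i) S := by
  unfold mobius gameDeriv
  rw [sum_powerset_insert hi, ← sum_add_distrib]
  refine sum_congr rfl fun T hT => ?_
  have hTS : T ⊆ S := mem_powerset.1 hT
  have hiT : i ∉ T := fun h => hi (hTS h)
  rw [card_insert_of_notMem hi, card_insert_of_notMem hiT, erase_eq_of_notMem hiT,
    Nat.add_sub_add_right, Nat.sub_add_comm (card_le_card hTS), pow_succ]
  ring

theorem mobius_const_of_nonempty (c : ℝ) {S : Finset ι} (hS : S.Nonempty) :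
    mobius (fun _ => c) S = 0 := by
  obtain ⟨i, hi⟩ := hS
  rw [← insert_erase hi, mobius_insert _ (notMem_erase i S)]
  simp [mobius, gameDeriv]

theorem gameDeriv_inter_mul_inter (f g : Finset ι → ℝ) {P Q : Finset ι} {i : ι}
    (hP : i ∈ P) (hQ : i ∉ Q) :
    gameDeriv (fun T => f (T ∩ P) * g (T ∩ Q)) i =
      fun T => gameDeriv f i (T ∩ P) * g (T ∩ Q) := by
  funext T
  have hiTQ : i ∉ T ∩ Q := fun h => hQ (mem_inter.1 h).2
  simp only [gameDeriv, insert_inter_of_mem hP, insert_inter_of_notMem hQ, erase_inter,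
    erase_eq_of_notMem hiTQ, sub_mul]

theorem mobius_inter_mul_inter (f g : Finset ι → ℝ) {P Q K : Finset ι} (hPQ : Disjoint P Q)
    (hK : K ⊆ P ∪ Q) :
    mobius (fun T => f (T ∩ P) * g (T ∩ Q)) K = mobius f (K ∩ P) * mobius g (K ∩ Q) := by
  induction K using Finset.induction_on generalizing f g with
  | empty => simp only [mobius_empty, empty_inter]
  | insert j K hj ih =>
    obtain ⟨hjPQ, hKPQ⟩ := insert_subset_iff.1 hK
    have hjP : j ∉ K ∩ P := fun h => hj (mem_inter.1 h).1
    have hjQ : j ∉ K ∩ Q := fun h => hj (mem_inter.1 h).1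
    rw [mobius_insert _ hj]
    rcases mem_union.1 hjPQ with hP | hQ
    · have hQ : j ∉ Q := disjoint_left.1 hPQ hP
      rw [gameDeriv_inter_mul_inter f g hP hQ, ih _ _ hKPQ, insert_inter_of_mem hP,
        insert_inter_of_notMem hQ, mobius_insert f hjP]
    · have hP : j ∉ P := disjoint_right.1 hPQ hQ
      have hderiv : gameDeriv (fun T => f (T ∩ P) * g (T ∩ Q)) j =
          fun T => f (T ∩ P) * gameDeriv g j (T ∩ Q) := by
        simpa only [mul_comm] using gameDeriv_inter_mul_inter g f hQ hP
      rw [hderiv, ih _ _ hKPQ, insert_inter_of_mem hQ, insert_inter_of_notMem hP,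
        mobius_insert g hjQ]

theorem mobius_gameComp (α β : Finset ι → ℝ) (i : ι) {A B K : Finset ι} (hAB : Disjoint A B)
    (hK : K ⊆ A ∪ B) :
    mobius (gameComp A B i α β) K =
      mobius α (K ∩ A) * mobius (fun _ => β B) (K ∩ B) +
        mobius (gameDeriv α i) (K ∩ A) * mobius β (K ∩ B) := by
  have hcomp : gameComp A B i α β =
      fun T => α (T ∩ A) * β B + gameDeriv α i (T ∩ A) * β (T ∩ B) := by
    funext T
    rw [gameComp, mul_comm (β B)]
  rw [hcomp, mobius_add, mobius_inter_mul_inter α (fun _ => β B) hAB hK,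
    mobius_inter_mul_inter (gameDeriv α i) β hAB hK]

end Mobius

/-- The Möbius transform of a composite game: for a nonempty coalition `K` of the
composite player set, `μ^{α ∘ᵢ β}(K) = β(B)·μ^α(K)` when `K ∩ B = ∅`, and
`μ^{α ∘ᵢ β}(K) = μ^α((K ∩ A) ∪ {i})·μ^β(K ∩ B)` when `K ∩ B ≠ ∅`. -/
theorem mobius_comp {ι : Type*} [DecidableEq ι]
    (A B : Finset ι) (α β : Finset ι → ℝ)
    (hAB : Disjoint A B) (hα0 : α ∅ = 0) (hβ0 : β ∅ = 0)
    (i : ι) (hi : i ∈ A) :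
    ∀ K, K ⊆ A.erase i ∪ B → K.Nonempty →
      (K ∩ B = ∅ → mobius (gameComp A B i α β) K = β B * mobius α K) ∧
      (K ∩ B ≠ ∅ →
        mobius (gameComp A B i α β) K = mobius α (insert i (K ∩ A)) * mobius β (K ∩ B)) := by
  intro K hK _
  have hKAB : K ⊆ A ∪ B := hK.trans (union_subset_union_left (erase_subset i A))
  rw [mobius_gameComp α β i hAB hKAB]
  constructor
  · intro hKB
    have hKA : K ∩ A = K :=
      inter_eq_left.2 ((disjoint_iff_inter_eq_empty.2 hKB).left_le_of_le_sup_right hKAB)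
    rw [hKA, hKB, mobius_empty, mobius_empty, hβ0, mul_zero, add_zero, mul_comm]
  · intro hKB
    have hiK : i ∉ K := fun h =>
      (mem_union.1 (hK h)).elim (notMem_erase i A) (disjoint_left.1 hAB hi)
    have hiKA : i ∉ K ∩ A := fun h => hiK (mem_inter.1 h).1
    rw [mobius_const_of_nonempty _ (nonempty_iff_ne_empty.2 hKB), mul_zero, zero_add,
      mobius_insert α hiKA]
end

section
/- Let Γ_A = (A, α) and Γ_B = (B, β) be cooperative games on disjoint finite player sets, let i ∈ A, and let j ∈ (A ⋄_i B). Then for every coalition S ⊆ (A ⋄_i B) ∖ {j}: if j ∈ A ∖ {i}, then ∂_j(α ∘_i β)(S) = β(B)·∂_j α(S_A) + ∂_j ∂_i α(S_A)·β(S_B); and if j ∈ B, then ∂_j(α ∘_i β)(S) = ∂_i α(S_A)·∂_j β(S_B), where S_A = S ∩ A and S_B = S ∩ B. -/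
open Finset

/-!
Restricting a set function to coalitions inside `C` commutes with `∂ⱼ` when `j ∈ C` and makes `j` a
null player when `j ∉ C`. Players of `A` and `B` therefore act on different factors of
`∂ᵢα(S_A) * β(S_B)`, and the Leibniz rule for `∂ⱼ` loses one of its two terms.
-/

section GameDeriv

variable {ι : Type*} [DecidableEq ι] {v w : Finset ι → ℝ} {j : ι} {S C : Finset ι}

theorem gameDeriv_add (v w : Finset ι → ℝ) (j : ι) (S : Finset ι) :
    gameDeriv (fun T ↦ v T + w T) j S = gameDeriv v j S + gameDeriv w j S :=
  add_sub_add_comm _ _ _ _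

theorem gameDeriv_const_mul (c : ℝ) (v : Finset ι → ℝ) (j : ι) (S : Finset ι) :
    gameDeriv (fun T ↦ c * v T) j S = c * gameDeriv v j S :=
  (mul_sub _ _ _).symm

theorem gameDeriv_mul (v w : Finset ι → ℝ) (j : ι) (S : Finset ι) :
    gameDeriv (fun T ↦ v T * w T) j S =
      gameDeriv v j S * w (insert j S) + v (S.erase j) * gameDeriv w j S := by
  simp only [gameDeriv]
  ring

theorem apply_insert_of_gameDeriv_eq_zero (hv : gameDeriv v j S = 0) : v (insert j S) = v S := by
  by_cases hj : j ∈ S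
  · rw [insert_eq_of_mem hj]
  · rw [sub_eq_zero.mp hv, erase_eq_of_notMem hj]

theorem apply_erase_of_gameDeriv_eq_zero (hv : gameDeriv v j S = 0) : v (S.erase j) = v S :=
  (sub_eq_zero.mp hv).symm.trans (apply_insert_of_gameDeriv_eq_zero hv)

theorem gameDeriv_mul_of_gameDeriv_right_eq_zero (hw : gameDeriv w j S = 0) :
    gameDeriv (fun T ↦ v T * w T) j S = gameDeriv v j S * w S := by
  rw [gameDeriv_mul, hw, mul_zero, add_zero, apply_insert_of_gameDeriv_eq_zero hw]

theorem gameDeriv_mul_of_gameDeriv_left_eq_zero (hv : gameDeriv v j S = 0) :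
    gameDeriv (fun T ↦ v T * w T) j S = v S * gameDeriv w j S := by
  rw [gameDeriv_mul, hv, zero_mul, zero_add, apply_erase_of_gameDeriv_eq_zero hv]

theorem gameDeriv_comp_inter_of_mem (v : Finset ι → ℝ) (hj : j ∈ C) (S : Finset ι) :
    gameDeriv (fun T ↦ v (T ∩ C)) j S = gameDeriv v j (S ∩ C) := by
  simp only [gameDeriv, insert_inter_of_mem hj, erase_inter]

theorem gameDeriv_comp_inter_of_notMem (v : Finset ι → ℝ) (hj : j ∉ C) (S : Finset ι) :
    gameDeriv (fun T ↦ v (T ∩ C)) j S = 0 := by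
  have hjS : j ∉ S ∩ C := fun h ↦ hj (mem_inter.mp h).2
  simp only [gameDeriv, insert_inter_of_notMem hj, erase_inter, erase_eq_of_notMem hjS, sub_self]

end GameDeriv

section GameComp

variable {ι : Type*} [DecidableEq ι] (A B : Finset ι) (α β : Finset ι → ℝ) (i j : ι) (S : Finset ι)

theorem gameDeriv_gameComp_eq_add :
    gameDeriv (gameComp A B i α β) j S =
      β B * gameDeriv (fun T ↦ α (T ∩ A)) j S +
        gameDeriv (fun T ↦ gameDeriv α i (T ∩ A) * β (T ∩ B)) j S := by
  rw [← gameDeriv_const_mul, ← gameDeriv_add]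
  rfl

theorem gameDeriv_gameComp_general :
    (j ∈ A \ B →
      gameDeriv (gameComp A B i α β) j S =
        β B * gameDeriv α j (S ∩ A) + gameDeriv (gameDeriv α i) j (S ∩ A) * β (S ∩ B)) ∧
    (j ∈ B \ A →
      gameDeriv (gameComp A B i α β) j S =
        gameDeriv α i (S ∩ A) * gameDeriv β j (S ∩ B)) := by
  rw [gameDeriv_gameComp_eq_add]
  constructor <;> intro hj
  · obtain ⟨hjA, hjB⟩ := mem_sdiff.mp hj
    have hβ : gameDeriv (fun T ↦ β (T ∩ B)) j S = 0 := gameDeriv_comp_inter_of_notMem β hjB S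
    rw [gameDeriv_mul_of_gameDeriv_right_eq_zero hβ, gameDeriv_comp_inter_of_mem α hjA,
      gameDeriv_comp_inter_of_mem (gameDeriv α i) hjA]
  · obtain ⟨hjB, hjA⟩ := mem_sdiff.mp hj
    have hα : gameDeriv (fun T ↦ gameDeriv α i (T ∩ A)) j S = 0 :=
      gameDeriv_comp_inter_of_notMem (gameDeriv α i) hjA S
    rw [gameDeriv_mul_of_gameDeriv_left_eq_zero hα, gameDeriv_comp_inter_of_notMem α hjA,
      gameDeriv_comp_inter_of_mem β hjB, mul_zero, zero_add]

end GameComp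

/-- Derivative of a composite game at a player `j` of the composite player set:
if `j ∈ A ∖ {i}` then `∂ⱼ(α ∘ᵢ β)(S) = β(B)·∂ⱼα(S_A) + ∂ⱼ∂ᵢα(S_A)·β(S_B)`, and
if `j ∈ B` then `∂ⱼ(α ∘ᵢ β)(S) = ∂ᵢα(S_A)·∂ⱼβ(S_B)`. -/
theorem gameDeriv_gameComp {ι : Type*} [DecidableEq ι]
    (A B : Finset ι) (α β : Finset ι → ℝ)
    (hAB : Disjoint A B) (hα0 : α ∅ = 0) (hβ0 : β ∅ = 0)
    (i : ι) (hi : i ∈ A) (j : ι) (hj : j ∈ A.erase i ∪ B) :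
    ∀ S ⊆ (A.erase i ∪ B).erase j,
      (j ∈ A.erase i →
        gameDeriv (gameComp A B i α β) j S =
          β B * gameDeriv α j (S ∩ A) + gameDeriv (gameDeriv α i) j (S ∩ A) * β (S ∩ B)) ∧
      (j ∈ B →
        gameDeriv (gameComp A B i α β) j S =
          gameDeriv α i (S ∩ A) * gameDeriv β j (S ∩ B)) := by
  intro S _
  have hderiv := gameDeriv_gameComp_general A B α β i j S
  rw [hAB.sdiff_eq_left, hAB.sdiff_eq_right] at hderiv
  exact hderiv.imp_left fun h hjA ↦ h (mem_of_mem_erase hjA)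
end

section
/- Let Γ_A = (A, α) and Γ_B = (B, β) be cooperative games on disjoint finite player sets and let i ∈ A. Then the duality involution commutes with the partial composition of games: (α ∘_i β)* = α* ∘_i β* as coalition functions on subsets of A ⋄_i B, i.e. (Γ_A ∘_i Γ_B)* = Γ_A* ∘_i Γ_B*. -/
open Finset

/-- The dual game of the game `(N, v)` : `v*(S) = v(N) − v(N ∖ S)`. -/
noncomputable def dualGame {ι : Type*} [DecidableEq ι]
    (N : Finset ι) (v : Finset ι → ℝ) (S : Finset ι) : ℝ :=
  v N - v (N \ S)

/-!
Differentiation turns duality into complementation: `∂ᵢ v*(S) = ∂ᵢ v(N ∖ S)`. On the other hand,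
a coalition of `A ⋄ᵢ B` lacks `i`, so the composite value of the complement of `S` can be rewritten
as `β(B) α(A ∖ S) − ∂ᵢ α(A ∖ S) β*(S)`. Subtracting this from its value `β(B) α(A)` at `S = ∅`
leaves `β(B) α*(S) + ∂ᵢ α*(S) β*(S)`.
-/

section

variable {ι : Type*} [DecidableEq ι]

lemma gameDeriv_of_mem (v : Finset ι → ℝ) {i : ι} {S : Finset ι} (hi : i ∈ S) :
    gameDeriv v i S = v S - v (S.erase i) := by
  rw [gameDeriv, insert_eq_of_mem hi]

lemma gameDeriv_erase (v : Finset ι → ℝ) (i : ι) (S : Finset ι) :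
    gameDeriv v i (S.erase i) = gameDeriv v i S := by
  have insert_erase_eq : insert i (S.erase i) = insert i S := by grind
  rw [gameDeriv, gameDeriv, insert_erase_eq, erase_idem]

lemma dualGame_empty (N : Finset ι) (v : Finset ι → ℝ) : dualGame N v ∅ = 0 := by
  rw [dualGame, sdiff_empty, sub_self]

lemma dualGame_self (N : Finset ι) {v : Finset ι → ℝ} (hv : v ∅ = 0) :
    dualGame N v N = v N := by
  rw [dualGame, Finset.sdiff_self, hv, sub_zero]

lemma dualGame_inter_self (N : Finset ι) (v : Finset ι → ℝ) (S : Finset ι) :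
    dualGame N v (S ∩ N) = dualGame N v S := by
  rw [dualGame, dualGame, sdiff_inter_self_right]

lemma gameDeriv_dualGame {N : Finset ι} (v : Finset ι → ℝ) {i : ι} (hi : i ∈ N)
    (S : Finset ι) : gameDeriv (dualGame N v) i S = gameDeriv v i (N \ S) := by
  rw [gameDeriv, gameDeriv, dualGame, dualGame, sdiff_insert, sdiff_erase hi]
  ring

lemma gameComp_sdiff {A B S : Finset ι} (α β : Finset ι → ℝ) {i : ι}
    (hiA : i ∈ A) (hiB : i ∉ B) (hiS : i ∉ S) :
    gameComp A B i α β ((A.erase i ∪ B) \ S) =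
      β B * α (A \ S) - gameDeriv α i (A \ S) * dualGame B β S := by
  have restrict_A : ((A.erase i ∪ B) \ S) ∩ A = (A \ S).erase i := by grind
  have restrict_B : ((A.erase i ∪ B) \ S) ∩ B = B \ S := by grind
  have deriv_eq : gameDeriv α i (A \ S) = α (A \ S) - α ((A \ S).erase i) :=
    gameDeriv_of_mem α (mem_sdiff.2 ⟨hiA, hiS⟩)
  rw [gameComp, restrict_A, restrict_B, gameDeriv_erase, dualGame]
  linear_combination β B * deriv_eq

lemma gameComp_erase_union_s5 {A B : Finset ι} (α β : Finset ι → ℝ) {i : ι}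
    (hiA : i ∈ A) (hiB : i ∉ B) :
    gameComp A B i α β (A.erase i ∪ B) = β B * α A := by
  simpa only [sdiff_empty, dualGame_empty, mul_zero, sub_zero]
    using gameComp_sdiff α β hiA hiB (notMem_empty i)

lemma gameComp_dualGame {A : Finset ι} (B : Finset ι) (α : Finset ι → ℝ) {β : Finset ι → ℝ}
    (hβ0 : β ∅ = 0) {i : ι} (hiA : i ∈ A) (S : Finset ι) :
    gameComp A B i (dualGame A α) (dualGame B β) S =
      β B * dualGame A α S + gameDeriv α i (A \ S) * dualGame B β S := by
  rw [gameComp, dualGame_self B hβ0, dualGame_inter_self, dualGame_inter_self,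
    gameDeriv_dualGame α hiA, sdiff_inter_self_right]

theorem dualGame_gameComp_general {A B S : Finset ι} (α : Finset ι → ℝ) {β : Finset ι → ℝ}
    (hβ0 : β ∅ = 0) {i : ι} (hiA : i ∈ A) (hiB : i ∉ B) (hiS : i ∉ S) :
    dualGame (A.erase i ∪ B) (gameComp A B i α β) S =
      gameComp A B i (dualGame A α) (dualGame B β) S := by
  calc dualGame (A.erase i ∪ B) (gameComp A B i α β) S
      = β B * α A - (β B * α (A \ S) - gameDeriv α i (A \ S) * dualGame B β S) := by
        rw [dualGame, gameComp_erase_union_s5 α β hiA hiB, gameComp_sdiff α β hiA hiB hiS]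
    _ = β B * dualGame A α S + gameDeriv α i (A \ S) * dualGame B β S := by
        simp only [dualGame]
        ring
    _ = gameComp A B i (dualGame A α) (dualGame B β) S :=
        (gameComp_dualGame B α hβ0 hiA S).symm

end

/-- Duality commutes with partial composition: `(α ∘ᵢ β)* = α* ∘ᵢ β*` on coalitions
of the composite player set `A ⋄ᵢ B = (A ∖ {i}) ∪ B`. -/
theorem dualGame_gameComp {ι : Type*} [DecidableEq ι]
    (A B : Finset ι) (α β : Finset ι → ℝ)
    (hAB : Disjoint A B) (hα0 : α ∅ = 0) (hβ0 : β ∅ = 0)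
    (i : ι) (hi : i ∈ A) :
    ∀ S ⊆ A.erase i ∪ B,
      dualGame (A.erase i ∪ B) (gameComp A B i α β) S =
        gameComp A B i (dualGame A α) (dualGame B β) S := by
  have hiB : i ∉ B := disjoint_left.1 hAB hi
  exact fun S hS => dualGame_gameComp_general α hβ0 hi hiB fun hiS => by simpa [hiB] using hS hiS
end

section
/- Let Γ_A = (A, α) and Γ_B = (B, β) be cooperative games on disjoint finite player sets and let i ∈ A. Fix an enumeration (a_1, …, a_n) of A with a_{i₀} = i for some index i₀, and an enumeration (b_1, …, b_m) of B, and let m^σ(α) and m^τ(β) be the corresponding marginal vectors of Γ_A and Γ_B. Then the partial tensor product m^σ(α) ⊗_i m^τ(β) is a marginal vector of the composite game Γ_A ∘_i Γ_B; namely, it is the marginal vector associated with the enumeration (a_1, …, a_{i₀−1}, b_1, …, b_m, a_{i₀+1}, …, a_n) of A ⋄_i B. -/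
open Finset

/-- The marginal vector of a game `v` associated with an enumeration `l` of its
player set: the coordinate of player `j` is
`v({c_1, …, c_p}) − v({c_1, …, c_{p−1}})` where `j = c_p` in `l`. -/
noncomputable def marginalVec {ι : Type*} [DecidableEq ι]
    (v : Finset ι → ℝ) (l : List ι) (j : ι) : ℝ :=
  v (insert j (l.takeWhile (fun a => decide (a ≠ j))).toFinset) -
    v (l.takeWhile (fun a => decide (a ≠ j))).toFinset

/-- The partial tensor product of `x ∈ ℝ^A` and `y ∈ ℝ^B` at `i ∈ A`:
`(x ⊗ᵢ y)_j = (Σ_{l ∈ B} y_l)·x_j` for `j ∈ A ∖ {i}` and `(x ⊗ᵢ y)_j = x_i·y_j`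
for `j ∈ B`. -/
noncomputable def ptensor {ι : Type*} [DecidableEq ι]
    (B : Finset ι) (i : ι) (x y : ι → ℝ) (j : ι) : ℝ :=
  if j ∈ B then x i * y j else (∑ l ∈ B, y l) * x j

/-!
Write the enumeration of `A` as `P, i, Q`. Along the enumeration `P, b_1, …, b_m, Q` the composite
game is, on each of the three blocks, an affine function of a component game:
* `S ↦ β(B) α(S)` for `S ⊆ P`,
* `T ↦ β(B) α(P) + ∂ᵢα(P) β(T)` when `T ⊆ B` has joined `P`,
* `S ↦ β(B) α(P ∪ {i} ∪ S)` when `S ⊆ Q` has joined `P ∪ B`.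

Marginal contributions only see the slopes `β(B)`, `∂ᵢα(P) = m_i(α)`, `β(B)`. These are the
coefficients of the partial tensor product, because the marginal vector of `β` sums to `β(B)`.
-/

section MarginalVec

variable {ι : Type*} [DecidableEq ι] {l p : List ι} {j : ι}

theorem takeWhile_ne_append_cons (l : List ι) (hj : j ∉ p) :
    (p ++ j :: l).takeWhile (fun a => decide (a ≠ j)) = p := by
  rw [List.takeWhile_append_of_pos (fun a ha => decide_eq_true (ne_of_mem_of_not_mem ha hj)),
    List.takeWhile_cons_of_neg (by simp), List.append_nil]

theorem dropWhile_ne_append_cons (l : List ι) (hj : j ∉ p) :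
    (p ++ j :: l).dropWhile (fun a => decide (a ≠ j)) = j :: l := by
  rw [List.dropWhile_append_of_pos (fun a ha => decide_eq_true (ne_of_mem_of_not_mem ha hj)),
    List.dropWhile_cons_of_neg (by simp)]

theorem marginalVec_cons_self (v : Finset ι → ℝ) (l : List ι) (j : ι) :
    marginalVec v (j :: l) j = v {j} - v ∅ := by
  simp [marginalVec]

theorem marginalVec_append_of_mem (v : Finset ι → ℝ) (l : List ι) (hj : j ∈ p) :
    marginalVec v (p ++ l) j = marginalVec v p j := by
  have takeWhile_eq : (p ++ l).takeWhile (fun a => decide (a ≠ j)) =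
      p.takeWhile (fun a => decide (a ≠ j)) := by
    obtain ⟨q, r, rfl, hjq⟩ := List.eq_append_cons_of_mem hj
    rw [List.append_assoc, List.cons_append, takeWhile_ne_append_cons _ hjq,
      takeWhile_ne_append_cons _ hjq]
  rw [marginalVec, marginalVec, takeWhile_eq]

theorem marginalVec_append_of_notMem (v : Finset ι → ℝ) (l : List ι) (hj : j ∉ p) :
    marginalVec v (p ++ l) j = marginalVec (fun S => v (p.toFinset ∪ S)) l j := by
  have ne_of_mem : ∀ a ∈ p, decide (a ≠ j) = true := fun a ha =>
    decide_eq_true (ne_of_mem_of_not_mem ha hj)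
  simp only [marginalVec, List.takeWhile_append_of_pos ne_of_mem, List.toFinset_append,
    union_insert]

theorem marginalVec_append_cons_self (v : Finset ι → ℝ) (l : List ι) (hj : j ∉ p) :
    marginalVec v (p ++ j :: l) j = gameDeriv v j p.toFinset := by
  rw [marginalVec_append_of_notMem v _ hj, marginalVec_cons_self, gameDeriv,
    erase_eq_of_notMem (mt List.mem_toFinset.mp hj), union_singleton, union_empty]

theorem marginalVec_eq_mul_of_affine {v w : Finset ι → ℝ} {c d : ℝ}
    (h : ∀ S ⊆ l.toFinset, v S = c * w S + d) (hj : j ∈ l) :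
    marginalVec v l j = c * marginalVec w l j := by
  have before_subset : (l.takeWhile (fun a => decide (a ≠ j))).toFinset ⊆ l.toFinset :=
    Multiset.toFinset_subset.mpr (List.takeWhile_subset _)
  rw [marginalVec, marginalVec, h _ before_subset,
    h _ (insert_subset (List.mem_toFinset.mpr hj) before_subset)]
  ring

theorem sum_marginalVec (v : Finset ι → ℝ) (l : List ι) :
    ∑ j ∈ l.toFinset, marginalVec v l j = v l.toFinset - v ∅ := by
  induction l generalizing v with
  | nil => simp
  | cons a l ih =>
    -- `a` is a null player of `w`, so its further occurrences in `l` contribute nothing.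
    let w : Finset ι → ℝ := fun S => v (insert a S)
    have marginalVec_w_self : marginalVec w l a = 0 := by simp [marginalVec, w]
    have marginalVec_cons (j : ι) : marginalVec v (a :: l) j =
        (if j = a then v {a} - v ∅ else 0) + marginalVec w l j := by
      split_ifs with hja
      · rw [hja, marginalVec_cons_self, marginalVec_w_self, add_zero]
      · have hj : j ∉ [a] := by simpa using hja
        simpa [w] using marginalVec_append_of_notMem v l hj
    calc ∑ j ∈ (a :: l).toFinset, marginalVec v (a :: l) j
        = (v {a} - v ∅) + ∑ j ∈ l.toFinset, marginalVec w l j := by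
          simp [marginalVec_cons, sum_add_distrib,
            sum_insert_of_eq_zero_if_notMem fun _ => marginalVec_w_self]
      _ = (v {a} - v ∅) + (v (insert a l.toFinset) - v {a}) := by
          rw [ih w]; rfl
      _ = v (a :: l).toFinset - v ∅ := by
          rw [List.toFinset_cons]; ring

end MarginalVec

section GameComp

variable {ι : Type*} [DecidableEq ι] {A B S T : Finset ι} {α β : Finset ι → ℝ} {i j : ι}
  {P L Q : List ι}

theorem gameComp_union (hAB : Disjoint A B) (hS : S ⊆ A) (hT : T ⊆ B) :
    gameComp A B i α β (S ∪ T) = β B * α S + gameDeriv α i S * β T := by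
  have inter_left : (S ∪ T) ∩ A = S := by
    rw [union_inter_distrib_right, inter_eq_left.mpr hS,
      disjoint_iff_inter_eq_empty.mp (hAB.symm.mono_left hT), union_empty]
  have inter_right : (S ∪ T) ∩ B = T := by
    rw [union_inter_distrib_right, inter_eq_left.mpr hT,
      disjoint_iff_inter_eq_empty.mp (hAB.mono_left hS), empty_union]
  rw [gameComp, inter_left, inter_right]

theorem gameComp_of_subset_left (hAB : Disjoint A B) (hβ : β ∅ = 0) (hS : S ⊆ A) :
    gameComp A B i α β S = β B * α S := by
  simpa [hβ] using gameComp_union (α := α) (β := β) (i := i) hAB hS (empty_subset B)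

theorem gameComp_union_right (hAB : Disjoint A B) (hS : S ⊆ A.erase i) :
    gameComp A B i α β (S ∪ B) = β B * α (insert i S) := by
  obtain ⟨hSA, hiS⟩ := subset_erase.mp hS
  rw [gameComp_union hAB hSA Subset.rfl, gameDeriv, erase_eq_of_notMem hiS]
  ring

theorem marginalVec_gameComp_append_of_mem_left (hAB : Disjoint A B) (hβ : β ∅ = 0)
    (hP : P.toFinset ⊆ A) (hj : j ∈ P) :
    marginalVec (gameComp A B i α β) (P ++ L) j = β B * marginalVec α P j := by
  rw [marginalVec_append_of_mem _ _ hj]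
  refine marginalVec_eq_mul_of_affine (d := 0) (fun S hS => ?_) hj
  rw [gameComp_of_subset_left hAB hβ (hS.trans hP), add_zero]

theorem marginalVec_gameComp_append_of_mem_right (hAB : Disjoint A B)
    (hP : P.toFinset ⊆ A) (hL : L.toFinset ⊆ B) (hj : j ∈ L) :
    marginalVec (gameComp A B i α β) (P ++ L) j =
      gameDeriv α i P.toFinset * marginalVec β L j := by
  have hjP : j ∉ P := fun hjP =>
    disjoint_left.mp hAB (hP (List.mem_toFinset.mpr hjP)) (hL (List.mem_toFinset.mpr hj))
  rw [marginalVec_append_of_notMem _ _ hjP]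
  refine marginalVec_eq_mul_of_affine (d := β B * α P.toFinset) (fun T hT => ?_) hj
  rw [gameComp_union hAB hP (hT.trans hL), add_comm]

theorem marginalVec_gameComp_append_append_of_mem_left (hAB : Disjoint A B)
    (hP : P.toFinset ⊆ A.erase i) (hQ : Q.toFinset ⊆ A.erase i) (hL : L.toFinset = B)
    (hjP : j ∉ P) (hjQ : j ∈ Q) :
    marginalVec (gameComp A B i α β) (P ++ L ++ Q) j =
      β B * marginalVec α (P ++ i :: Q) j := by
  have hjA : j ∈ A.erase i := hQ (List.mem_toFinset.mpr hjQ)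
  have hjL : j ∉ L := fun hjL =>
    disjoint_left.mp hAB (mem_of_mem_erase hjA) (hL ▸ List.mem_toFinset.mpr hjL)
  have hjPL : j ∉ P ++ L := by simp [hjP, hjL]
  have hjPi : j ∉ P ++ [i] := by simp [hjP, ne_of_mem_erase hjA]
  rw [List.append_cons P,
    marginalVec_append_of_notMem _ _ hjPL, marginalVec_append_of_notMem _ _ hjPi]
  refine marginalVec_eq_mul_of_affine (d := 0) (fun S hS => ?_) hjQ
  rw [List.toFinset_append, List.toFinset_append, hL, union_right_comm,
    gameComp_union_right hAB (union_subset hP (hS.trans hQ)), add_zero]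
  simp

theorem ptensor_marginalVec_append_cons (hAB : Disjoint A B) (hβ : β ∅ = 0)
    (hiP : i ∉ P) (hiQ : i ∉ Q) (hA : (P ++ i :: Q).toFinset = A) (hL : L.toFinset = B)
    (hj : j ∈ A.erase i ∪ B) :
    ptensor B i (marginalVec α (P ++ i :: Q)) (marginalVec β L) j =
      marginalVec (gameComp A B i α β) (P ++ L ++ Q) j := by
  have erase_eq : A.erase i = P.toFinset ∪ Q.toFinset := by
    rw [← hA, List.toFinset_append, List.toFinset_cons, union_insert,
      erase_insert (by simp [hiP, hiQ])]
  have hP : P.toFinset ⊆ A.erase i := erase_eq ▸ subset_union_left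
  have hQ : Q.toFinset ⊆ A.erase i := erase_eq ▸ subset_union_right
  have hPA : P.toFinset ⊆ A := hP.trans (erase_subset i A)
  have sum_eq : ∑ k ∈ B, marginalVec β L k = β B := by
    rw [← hL, sum_marginalVec, hβ, sub_zero]
  by_cases hjB : j ∈ B
  · have hjL : j ∈ L := List.mem_toFinset.mp (hL ▸ hjB)
    rw [ptensor, if_pos hjB, marginalVec_append_cons_self α Q hiP,
      marginalVec_append_of_mem _ Q (List.mem_append_right P hjL),
      marginalVec_gameComp_append_of_mem_right hAB hPA hL.subset hjL]
  · rw [ptensor, if_neg hjB, sum_eq]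
    by_cases hjP : j ∈ P
    · rw [marginalVec_append_of_mem α _ hjP, List.append_assoc,
        marginalVec_gameComp_append_of_mem_left hAB hβ hPA hjP]
    · have hjQ : j ∈ Q := by simpa [erase_eq, hjB, hjP] using hj
      rw [marginalVec_gameComp_append_append_of_mem_left hAB hP hQ hL hjP hjQ]

end GameComp

/-- The partial tensor product of marginal vectors of the components is a marginal
vector of the composite game: it is the marginal vector associated with the
enumeration `(a_1, …, a_{i₀−1}, b_1, …, b_m, a_{i₀+1}, …, a_n)` of `A ⋄ᵢ B`. -/
theorem marginalVec_gameComp {ι : Type*} [DecidableEq ι]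
    (A B : Finset ι) (α β : Finset ι → ℝ)
    (hAB : Disjoint A B) (hα0 : α ∅ = 0) (hβ0 : β ∅ = 0)
    (i : ι) (hi : i ∈ A)
    (lA lB : List ι) (hlA : lA.Nodup) (hlAA : lA.toFinset = A)
    (hlB : lB.Nodup) (hlBB : lB.toFinset = B) :
    ∀ j ∈ A.erase i ∪ B,
      ptensor B i (marginalVec α lA) (marginalVec β lB) j =
        marginalVec (gameComp A B i α β)
          (lA.takeWhile (fun a => decide (a ≠ i)) ++ lB ++
            (lA.dropWhile (fun a => decide (a ≠ i))).tail) j := by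
  intro j hj
  obtain ⟨P, Q, rfl, hiP⟩ := List.eq_append_cons_of_mem (List.mem_toFinset.mp (hlAA ▸ hi))
  have hiQ : i ∉ Q := (List.nodup_cons.mp hlA.of_append_right).1
  rw [takeWhile_ne_append_cons Q hiP, dropWhile_ne_append_cons Q hiP, List.tail_cons]
  exact ptensor_marginalVec_append_cons hAB hβ0 hiP hiQ hlAA hlBB hj
end

section
/- Capacities are stable under partial composition: if Γ_A = (A, α) and Γ_B = (B, β) are games on disjoint finite player sets whose coalition functions are non-negative and monotone, and i ∈ A, then the coalition function of the composite game Γ_A ∘_i Γ_B is also non-negative and monotone. -/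
open Finset

/-!
When `i ∉ S`, the composite value is the weighted sum
`(β B - β (S ∩ B)) * α (S ∩ A) + β (S ∩ B) * α (insert i (S ∩ A))`. Its weights are non-negative, so
it increases with the part of `S` in `A` while the part in `B` is held fixed. In the other direction
it is affine in `β (S ∩ B)` with slope `∂ᵢα (S ∩ A) ≥ 0`.
-/

section

variable {ι : Type*} [DecidableEq ι] {A B S T : Finset ι} {α β : Finset ι → ℝ} {i : ι}

theorem gameDeriv_nonneg (hα : MonotoneOn α (Set.Iic A)) (hi : i ∈ A) (hS : S ⊆ A) :
    0 ≤ gameDeriv α i S :=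
  sub_nonneg.mpr <| hα ((erase_subset i S).trans hS) (insert_subset hi hS)
    ((erase_subset i S).trans (subset_insert i S))

theorem mul_add_gameDeriv_mul_of_notMem (hiS : i ∉ S) (b t : ℝ) :
    b * α S + gameDeriv α i S * t = (b - t) * α S + t * α (insert i S) := by
  rw [gameDeriv, erase_eq_of_notMem hiS]
  ring

theorem mul_add_gameDeriv_mul_le_of_subset (hα : MonotoneOn α (Set.Iic A)) (hi : i ∈ A)
    (hST : S ⊆ T) (hT : T ⊆ A) (hiT : i ∉ T) {b t : ℝ} (ht : 0 ≤ t) (htb : t ≤ b) :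
    b * α S + gameDeriv α i S * t ≤ b * α T + gameDeriv α i T * t := by
  have hS : S ⊆ A := hST.trans hT
  have without_i : α S ≤ α T := hα hS hT hST
  have with_i : α (insert i S) ≤ α (insert i T) :=
    hα (insert_subset hi hS) (insert_subset hi hT) (insert_subset_insert i hST)
  rw [mul_add_gameDeriv_mul_of_notMem (notMem_mono hST hiT),
    mul_add_gameDeriv_mul_of_notMem hiT]
  exact add_le_add (mul_le_mul_of_nonneg_left without_i (sub_nonneg.mpr htb))
    (mul_le_mul_of_nonneg_left with_i ht)

theorem gameComp_nonneg (hαnn : ∀ S ⊆ A, 0 ≤ α S) (hβnn : ∀ S ⊆ B, 0 ≤ β S)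
    (hα : MonotoneOn α (Set.Iic A)) (hi : i ∈ A) (S : Finset ι) :
    0 ≤ gameComp A B i α β S :=
  add_nonneg (mul_nonneg (hβnn B Subset.rfl) (hαnn _ inter_subset_right))
    (mul_nonneg (gameDeriv_nonneg hα hi inter_subset_right) (hβnn _ inter_subset_right))

theorem monotoneOn_gameComp (hβnn : ∀ S ⊆ B, 0 ≤ β S) (hα : MonotoneOn α (Set.Iic A))
    (hβ : MonotoneOn β (Set.Iic B)) (hi : i ∈ A) :
    MonotoneOn (gameComp A B i α β) {S | i ∉ S} := by
  intro S _ T hiT hST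
  have hβS : β (S ∩ B) ≤ β B := hβ inter_subset_right Subset.rfl inter_subset_right
  have hβST : β (S ∩ B) ≤ β (T ∩ B) :=
    hβ inter_subset_right inter_subset_right (inter_subset_inter_right hST)
  calc gameComp A B i α β S
      = β B * α (S ∩ A) + gameDeriv α i (S ∩ A) * β (S ∩ B) := rfl
    _ ≤ β B * α (T ∩ A) + gameDeriv α i (T ∩ A) * β (S ∩ B) :=
      mul_add_gameDeriv_mul_le_of_subset hα hi (inter_subset_inter_right hST) inter_subset_right
        (notMem_mono inter_subset_left hiT) (hβnn _ inter_subset_right) hβS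
    _ ≤ β B * α (T ∩ A) + gameDeriv α i (T ∩ A) * β (T ∩ B) := by
      gcongr
      exact gameDeriv_nonneg hα hi inter_subset_right
    _ = gameComp A B i α β T := rfl

theorem capacity_gameComp_general (hαnn : ∀ S ⊆ A, 0 ≤ α S) (hβnn : ∀ S ⊆ B, 0 ≤ β S)
    (hα : MonotoneOn α (Set.Iic A)) (hβ : MonotoneOn β (Set.Iic B)) (hi : i ∈ A) :
    (∀ S, 0 ≤ gameComp A B i α β S) ∧ MonotoneOn (gameComp A B i α β) {S | i ∉ S} :=
  ⟨gameComp_nonneg hαnn hβnn hα hi, monotoneOn_gameComp hβnn hα hβ hi⟩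

theorem notMem_of_subset_erase_union (hiB : i ∉ B) (hS : S ⊆ A.erase i ∪ B) : i ∉ S :=
  fun hiS => by simpa [hiB] using hS hiS

end

/-- Capacities (non-negative monotone games) are stable under partial composition:
if `α` and `β` are non-negative and monotone on coalitions of their player sets,
then so is the coalition function of the composite game `Γ_A ∘ᵢ Γ_B`. -/
theorem capacity_gameComp {ι : Type*} [DecidableEq ι]
    (A B : Finset ι) (α β : Finset ι → ℝ)
    (hAB : Disjoint A B) (hα0 : α ∅ = 0) (hβ0 : β ∅ = 0)
    (hαnn : ∀ S ⊆ A, 0 ≤ α S) (hβnn : ∀ S ⊆ B, 0 ≤ β S)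
    (hαm : ∀ S T : Finset ι, S ⊆ T → T ⊆ A → α S ≤ α T)
    (hβm : ∀ S T : Finset ι, S ⊆ T → T ⊆ B → β S ≤ β T)
    (i : ι) (hi : i ∈ A) :
    (∀ S ⊆ A.erase i ∪ B, 0 ≤ gameComp A B i α β S) ∧
    (∀ S T : Finset ι, S ⊆ T → T ⊆ A.erase i ∪ B →
      gameComp A B i α β S ≤ gameComp A B i α β T) := by
  have hiB : i ∉ B := disjoint_left.mp hAB hi
  obtain ⟨nonneg, mono⟩ := capacity_gameComp_general hαnn hβnn
    (fun S _ T hT hST => hαm S T hST hT) (fun S _ T hT hST => hβm S T hST hT) hi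
  exact ⟨fun S _ => nonneg S, fun S T hST hT => mono
    (notMem_of_subset_erase_union hiB (hST.trans hT)) (notMem_of_subset_erase_union hiB hT) hST⟩
end

section
/- For any integer k ≥ 2, k-monotone non-negative games are stable under partial composition: if Γ_A = (A, α) and Γ_B = (B, β) are games on disjoint finite player sets whose coalition functions are non-negative and k-monotone, and i ∈ A, then the coalition function of the composite game Γ_A ∘_i Γ_B is also non-negative and k-monotone. -/
open Finset

/-- A game `(N, v)` is `k`-monotone if for every family of `k` coalitions
`A_1, …, A_k ⊆ N`,
`v(⋃ᵢ Aᵢ) ≥ Σ_{∅ ≠ I ⊆ [k]} (−1)^{|I|+1} v(⋂_{i ∈ I} Aᵢ)`.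
Here `⋂_{t ∈ I} F t` is expressed as `N.filter (fun x => ∀ t ∈ I, x ∈ F t)`. -/
def KMonotone {ι : Type*} [DecidableEq ι] (k : ℕ) (N : Finset ι) (v : Finset ι → ℝ) : Prop :=
  ∀ F : Fin k → Finset ι, (∀ t, F t ⊆ N) →
    ∑ I ∈ Finset.univ.powerset.filter (fun I : Finset (Fin k) => I.Nonempty),
        (-1 : ℝ) ^ (I.card + 1) * v (N.filter (fun x => ∀ t ∈ I, x ∈ F t)) ≤
      v (Finset.univ.sup F)

/-!
For `f` on a meet-semilattice put `Δ_c f x = f x - f (x ⊓ c)`. A non-negative game `(N, v)` with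
`v ∅ = 0` is `k`-monotone, `k ≥ 2`, exactly when all iterated differences of `S ↦ v (S ∩ N)` of
order at most `k` are non-negative; the orders below `k` come for free because `Δ_∅ v = v`.

Put `h S = α (S ∩ A)`, `g S = β (S ∩ B)`, `c = A \ {i}` and `b = β B ≥ g`. At `S` the composite
game is `b * h (x ⊓ c) + Δ_c h x * g x` with `x = S ∪ {i}`; it equals
`(b - g x) * h (x ⊓ c) + g x * h x`, hence is non-negative. Only differences of order at most
`k - 1` of `Δ_c h` are under control, so `Δ_c h * g` cannot be treated on its own. However, applying
`Δ_e` to the whole expression gives the same expression with `Δ_e h` and `g (· ⊓ e)` in place of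
`h` and `g`, plus the product `Δ_c h * Δ_e g`, in which both factors have spent one order.
-/

section InfDiff

variable {L M R : Type*} [SemilatticeInf L] [SemilatticeInf M] [CommRing R]

/-- The difference operator `Δ_c` of a function on a meet-semilattice. For sets, it measures what
`f` loses when its argument is cut down to `c`. -/
def infDiff (c : L) (f : L → R) (x : L) : R :=
  f x - f (x ⊓ c)

theorem infDiff_bot [OrderBot L] {f : L → R} (hf : f ⊥ = 0) : infDiff ⊥ f = f := by
  funext x
  simp [infDiff, hf]

theorem infDiff_comp {φ : L → M} (hφ : ∀ x y, φ (x ⊓ y) = φ x ⊓ φ y) (c : L) (f : M → R) :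
    infDiff c (fun x => f (φ x)) = fun x => infDiff (φ c) f (φ x) := by
  funext x
  simp only [infDiff, hφ]

theorem infDiff_add (c : L) (f g : L → R) :
    infDiff c (fun x => f x + g x) = fun x => infDiff c f x + infDiff c g x := by
  funext x
  simp only [infDiff]
  ring

theorem infDiff_mul (c : L) (f g : L → R) :
    infDiff c (fun x => f x * g x) = fun x => infDiff c f x * g (x ⊓ c) + f x * infDiff c g x := by
  funext x
  simp only [infDiff]
  ring

theorem infDiff_const_mul_inf_add_infDiff_mul (b : R) (c e : L) (h g : L → R) :
    infDiff e (fun x => b * h (x ⊓ c) + infDiff c h x * g x) = fun x =>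
      (b * infDiff e h (x ⊓ c) + infDiff c (infDiff e h) x * g (x ⊓ e)) +
        infDiff c h x * infDiff e g x := by
  funext x
  simp only [infDiff, inf_right_comm x e c]
  ring

/-- The iterated difference `∏_{t ∈ s} Δ_{F t}` of `f` at `x`, expanded by inclusion-exclusion.
The fold is the meet of `x` with all `F t`, `t ∈ I`; it needs no top element. -/
def iterDiff {τ : Type*} (s : Finset τ) (F : τ → L) (f : L → R) (x : L) : R :=
  ∑ I ∈ s.powerset, (-1) ^ #I * f (I.fold (· ⊓ ·) x F)

section iterDiff

variable {τ : Type*}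

theorem iterDiff_empty (F : τ → L) (f : L → R) (x : L) : iterDiff ∅ F f x = f x := by
  simp [iterDiff]

theorem iterDiff_insert [DecidableEq τ] {a : τ} {s : Finset τ} (ha : a ∉ s) (F : τ → L)
    (f : L → R) (x : L) : iterDiff (insert a s) F f x = iterDiff s F (infDiff (F a) f) x := by
  rw [iterDiff, sum_powerset_insert ha, ← sum_add_distrib]
  refine sum_congr rfl fun I hI => ?_
  have haI : a ∉ I := fun h => ha (mem_powerset.1 hI h)
  rw [card_insert_of_notMem haI, fold_insert haI, infDiff, inf_comm (F a)]
  ring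

theorem iterDiff_congr {s : Finset τ} {F G : τ → L} (hFG : ∀ t ∈ s, F t = G t) (f : L → R)
    (x : L) : iterDiff s F f x = iterDiff s G f x := by
  refine sum_congr rfl fun I hI => ?_
  rw [fold_congr fun t ht => hFG t (mem_powerset.1 hI ht)]

end iterDiff

variable [PartialOrder R]

/-- All iterated differences of `f` of order at most `n`, including `f` itself, are
non-negative. -/
def DiffNonneg : ℕ → (L → R) → Prop
  | 0, f => ∀ x, 0 ≤ f x
  | n + 1, f => (∀ x, 0 ≤ f x) ∧ ∀ c, DiffNonneg n (infDiff c f)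

namespace DiffNonneg

variable {n : ℕ} {f g h : L → R}

theorem nonneg (hf : DiffNonneg n f) : ∀ x, 0 ≤ f x := by
  cases n with
  | zero => exact hf
  | succ n => exact hf.1

theorem of_succ (hf : DiffNonneg (n + 1) f) : DiffNonneg n f := by
  induction n generalizing f with
  | zero => exact hf.1
  | succ n ih => exact ⟨hf.1, fun c => ih (hf.2 c)⟩

theorem comp {f : M → R} (hf : DiffNonneg n f) {φ : L → M}
    (hφ : ∀ x y, φ (x ⊓ y) = φ x ⊓ φ y) : DiffNonneg n fun x => f (φ x) := by
  induction n generalizing f with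
  | zero => exact fun x => hf (φ x)
  | succ n ih =>
    refine ⟨fun x => hf.1 (φ x), fun c => ?_⟩
    rw [infDiff_comp hφ]
    exact ih (hf.2 (φ c))

theorem comp_inf (hf : DiffNonneg n f) (c : L) : DiffNonneg n fun x => f (x ⊓ c) :=
  hf.comp fun x y => inf_inf_distrib_right x y c

variable [IsOrderedRing R]

theorem add (hf : DiffNonneg n f) (hg : DiffNonneg n g) : DiffNonneg n fun x => f x + g x := by
  induction n generalizing f g with
  | zero => exact fun x => add_nonneg (hf x) (hg x)
  | succ n ih =>
    refine ⟨fun x => add_nonneg (hf.1 x) (hg.1 x), fun c => ?_⟩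
    rw [infDiff_add]
    exact ih (hf.2 c) (hg.2 c)

theorem mul (hf : DiffNonneg n f) (hg : DiffNonneg n g) : DiffNonneg n fun x => f x * g x := by
  induction n generalizing f g with
  | zero => exact fun x => mul_nonneg (hf x) (hg x)
  | succ n ih =>
    refine ⟨fun x => mul_nonneg (hf.1 x) (hg.1 x), fun c => ?_⟩
    rw [infDiff_mul]
    exact (ih (hf.2 c) (hg.of_succ.comp_inf c)).add (ih hf.of_succ (hg.2 c))

theorem const_mul_inf_add_infDiff_mul {b : R} (hh : DiffNonneg n h) (hg : DiffNonneg n g)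
    (hgb : ∀ x, g x ≤ b) (c : L) :
    DiffNonneg n fun x => b * h (x ⊓ c) + infDiff c h x * g x := by
  have value_nonneg {h g : L → R} (hh : ∀ x, 0 ≤ h x) (hg : ∀ x, 0 ≤ g x) (hgb : ∀ x, g x ≤ b)
      (x : L) : 0 ≤ b * h (x ⊓ c) + infDiff c h x * g x :=
    calc
      0 ≤ (b - g x) * h (x ⊓ c) + g x * h x :=
        add_nonneg (mul_nonneg (sub_nonneg.2 (hgb x)) (hh _)) (mul_nonneg (hg x) (hh x))
      _ = b * h (x ⊓ c) + infDiff c h x * g x := by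
        rw [infDiff]
        ring
  induction n generalizing h g with
  | zero => exact value_nonneg hh hg hgb
  | succ n ih =>
    refine ⟨value_nonneg hh.1 hg.1 hgb, fun e => ?_⟩
    rw [infDiff_const_mul_inf_add_infDiff_mul]
    exact (ih (hh.2 e) (hg.of_succ.comp_inf e) fun x => hgb (x ⊓ e)).add ((hh.2 c).mul (hg.2 e))

end DiffNonneg

section iterDiff

variable {τ : Type*}

theorem DiffNonneg.iterDiff_nonneg {s : Finset τ} {f : L → R} (hf : DiffNonneg #s f)
    (F : τ → L) (x : L) : 0 ≤ iterDiff s F f x := by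
  classical
  induction s using Finset.induction_on generalizing f with
  | empty =>
    rw [iterDiff_empty]
    exact hf.nonneg x
  | insert a s ha ih =>
    rw [card_insert_of_notMem ha] at hf
    rw [iterDiff_insert ha]
    exact ih (hf.2 (F a))

theorem diffNonneg_card_of_iterDiff_nonneg [OrderBot L] {s : Finset τ} {f : L → R} (hf : f ⊥ = 0)
    (hs : ∀ (F : τ → L) (x : L), 0 ≤ iterDiff s F f x) : DiffNonneg #s f := by
  classical
  induction s using Finset.induction_on generalizing f with
  | empty => exact fun x => iterDiff_empty (fun _ => ⊥) f x ▸ hs _ x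
  | insert a s ha ih =>
    have diffNonneg_infDiff (c : L) : DiffNonneg #s (infDiff c f) := by
      refine ih (by simp [infDiff, hf]) fun F x => ?_
      have eq_on : ∀ t ∈ s, F t = Function.update F a c t := fun t ht =>
        (Function.update_of_ne (ne_of_mem_of_not_mem ht ha) c F).symm
      simpa only [iterDiff_congr eq_on, iterDiff_insert ha, Function.update_self]
        using hs (Function.update F a c) x
    rw [card_insert_of_notMem ha]
    exact ⟨infDiff_bot hf ▸ (diffNonneg_infDiff ⊥).nonneg, diffNonneg_infDiff⟩

end iterDiff

end InfDiff

section Game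

variable {ι : Type*} [DecidableEq ι] {k : ℕ} {N : Finset ι} {v : Finset ι → ℝ}

theorem mem_fold_inf {τ : Type*} {I : Finset τ} {F : τ → Finset ι} {U : Finset ι} {x : ι} :
    x ∈ (I.fold (· ⊓ ·) U F : Finset ι) ↔ x ∈ U ∧ ∀ t ∈ I, x ∈ F t := by
  classical
  induction I using Finset.induction_on with
  | empty => simp
  | insert a I ha ih =>
    rw [fold_insert ha, inf_eq_inter, mem_inter, ih, forall_mem_insert]
    tauto

theorem iterDiff_univ_restrict (v : Finset ι → ℝ) {N U : Finset ι} {F G : Fin k → Finset ι}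
    (hG : ∀ t, G t = F t ∩ (U ∩ N)) :
    iterDiff univ F (fun S => v (S ∩ N)) U = v (U ∩ N) -
      ∑ I ∈ univ.powerset.filter (fun I : Finset (Fin k) => I.Nonempty),
        (-1 : ℝ) ^ (#I + 1) * v (N.filter fun x => ∀ t ∈ I, x ∈ G t) := by
  have filter_eq : univ.powerset.filter (fun I : Finset (Fin k) => I.Nonempty) =
      univ.powerset.erase ∅ := by
    ext I
    simp [nonempty_iff_ne_empty]
  rw [iterDiff, ← add_sum_erase _ _ (empty_mem_powerset univ), filter_eq, sub_eq_add_neg,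
    ← sum_neg_distrib]
  congr 1
  · simp
  · refine sum_congr rfl fun I hI => ?_
    obtain ⟨t, ht⟩ := nonempty_iff_ne_empty.2 (ne_of_mem_erase hI)
    have meet_eq : (I.fold (· ⊓ ·) U F : Finset ι) ∩ N =
        N.filter fun x => ∀ t ∈ I, x ∈ G t := by
      ext x
      simp only [mem_inter, mem_fold_inf, mem_filter, hG]
      exact ⟨fun ⟨⟨hU, hF⟩, hN⟩ => ⟨hN, fun s hs => ⟨hF s hs, hU, hN⟩⟩,
        fun ⟨hN, h⟩ => ⟨⟨(h t ht).2.1, fun s hs => (h s hs).1⟩, hN⟩⟩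
    rw [meet_eq, pow_succ]
    ring

theorem DiffNonneg.kMonotone (hv : DiffNonneg k fun S => v (S ∩ N)) : KMonotone k N v := by
  intro F hF
  have sup_inter : univ.sup F ∩ N = univ.sup F :=
    inter_eq_left.2 (Finset.sup_le fun t _ => hF t)
  have inter_sup (t : Fin k) : F t = F t ∩ (univ.sup F ∩ N) := by
    rw [sup_inter, inter_eq_left.2 (le_sup (f := F) (mem_univ t))]
  rw [← Fintype.card_fin k, ← card_univ] at hv
  simpa only [iterDiff_univ_restrict v inter_sup, sup_inter, sub_nonneg]
    using hv.iterDiff_nonneg F (univ.sup F)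

namespace KMonotone

theorem sum_le_sup_of_pairwise_disjoint (hv : KMonotone k N v) (hv0 : v ∅ = 0)
    {F : Fin k → Finset ι} (hFN : ∀ t, F t ⊆ N) (hF : Pairwise (Function.onFun Disjoint F)) :
    ∑ t, v (F t) ≤ v (univ.sup F) := by
  refine le_of_eq_of_le ?_ (hv F hFN)
  have singletons_subset : univ.map ⟨singleton, singleton_injective⟩ ⊆
      univ.powerset.filter (fun I : Finset (Fin k) => I.Nonempty) := by
    simp [subset_iff]
  rw [← sum_subset singletons_subset, sum_map]
  · refine sum_congr rfl fun t _ => ?_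
    simp [filter_mem_eq_inter, inter_eq_right.2 (hFN t)]
  · intro I hI hI_singleton
    obtain ⟨t, rfl⟩ | ⟨s, hs, t, ht, hst⟩ :=
      (mem_filter.1 hI).2.exists_eq_singleton_or_nontrivial
    · simp at hI_singleton
    · rw [filter_eq_empty_iff.2 fun x _ hx =>
        disjoint_left.1 (hF hst) (hx s hs) (hx t ht), hv0, mul_zero]

theorem le_of_subset (hv : KMonotone k N v) (hk : 2 ≤ k) (hv0 : v ∅ = 0)
    (hvnn : ∀ S ⊆ N, 0 ≤ v S) {S T : Finset ι} (hST : S ⊆ T) (hTN : T ⊆ N) : v S ≤ v T := by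
  have : NeZero k := ⟨by omega⟩
  have fin_one_ne_zero : (1 : Fin k) ≠ 0 := by
    simp only [ne_eq, Fin.one_eq_zero_iff]
    omega
  let F : Fin k → Finset ι := fun t => if t = 0 then S else if t = 1 then T \ S else ∅
  have F_subset (t : Fin k) : F t ⊆ T := by
    grind
  have F_disjoint : Pairwise (Function.onFun Disjoint F) := by
    intro s t hst
    grind [disjoint_left]
  have F_zero : F 0 = S := if_pos rfl
  have F_one : F 1 = T \ S := by
    simp only [F, fin_one_ne_zero, if_false, if_true]
  have sup_F : univ.sup F = T := by
    refine le_antisymm (Finset.sup_le fun t _ => F_subset t) ?_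
    rw [← union_sdiff_of_subset hST, ← F_one, ← F_zero]
    exact union_subset (le_sup (mem_univ 0)) (le_sup (mem_univ 1))
  calc
    v S = v (F 0) := by rw [F_zero]
    _ ≤ ∑ t, v (F t) :=
      single_le_sum (f := fun t => v (F t)) (fun t _ => hvnn _ ((F_subset t).trans hTN))
        (mem_univ 0)
    _ ≤ v (univ.sup F) :=
      hv.sum_le_sup_of_pairwise_disjoint hv0 (fun t => (F_subset t).trans hTN) F_disjoint
    _ = v T := by rw [sup_F]

theorem diffNonneg (hv : KMonotone k N v) (hk : 2 ≤ k) (hv0 : v ∅ = 0)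
    (hvnn : ∀ S ⊆ N, 0 ≤ v S) : DiffNonneg k fun S => v (S ∩ N) := by
  rw [← Fintype.card_fin k, ← card_univ]
  refine diffNonneg_card_of_iterDiff_nonneg (by simpa using hv0) fun F U => ?_
  rw [iterDiff_univ_restrict v fun _ => rfl, sub_nonneg]
  calc
    _ ≤ v (univ.sup fun t => F t ∩ (U ∩ N)) :=
      hv _ fun t => inter_subset_right.trans inter_subset_right
    _ ≤ v (U ∩ N) :=
      hv.le_of_subset hk hv0 hvnn (Finset.sup_le fun t _ => inter_subset_right) inter_subset_right

end KMonotone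

theorem gameComp_inter_erase_union {A B : Finset ι} (hAB : Disjoint A B) {i : ι} (hi : i ∈ A)
    (α β : Finset ι → ℝ) (S : Finset ι) :
    gameComp A B i α β (S ∩ (A.erase i ∪ B)) =
      β B * α ((insert i S ∩ A.erase i) ∩ A) +
        infDiff (A.erase i) (fun T => α (T ∩ A)) (insert i S) * β (insert i S ∩ B) := by
  have hiB : i ∉ B := disjoint_left.1 hAB hi
  have inter_A : S ∩ (A.erase i ∪ B) ∩ A = (insert i S ∩ A.erase i) ∩ A := by
    grind [disjoint_left]
  have inter_B : S ∩ (A.erase i ∪ B) ∩ B = insert i S ∩ B := by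
    grind
  have insert_inter : insert i ((insert i S ∩ A.erase i) ∩ A) = insert i S ∩ A := by
    grind
  have erase_inter : ((insert i S ∩ A.erase i) ∩ A).erase i = (insert i S ∩ A.erase i) ∩ A := by
    grind
  rw [gameComp, gameDeriv, inter_A, inter_B, insert_inter, erase_inter, infDiff, inf_eq_inter]

end Game

/-- For every `k ≥ 2`, non-negative `k`-monotone games are stable under partial
composition. -/
theorem kMonotone_gameComp {ι : Type*} [DecidableEq ι]
    (k : ℕ) (hk : 2 ≤ k)
    (A B : Finset ι) (α β : Finset ι → ℝ)
    (hAB : Disjoint A B) (hα0 : α ∅ = 0) (hβ0 : β ∅ = 0)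
    (hαnn : ∀ S ⊆ A, 0 ≤ α S) (hβnn : ∀ S ⊆ B, 0 ≤ β S)
    (hαk : KMonotone k A α) (hβk : KMonotone k B β)
    (i : ι) (hi : i ∈ A) :
    (∀ S ⊆ A.erase i ∪ B, 0 ≤ gameComp A B i α β S) ∧
    KMonotone k (A.erase i ∪ B) (gameComp A B i α β) := by
  have hα : DiffNonneg k fun S => α (S ∩ A) := hαk.diffNonneg hk hα0 hαnn
  have hβ : DiffNonneg k fun S => β (S ∩ B) := hβk.diffNonneg hk hβ0 hβnn
  have hβ_le (S : Finset ι) : β (S ∩ B) ≤ β B :=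
    hβk.le_of_subset hk hβ0 hβnn inter_subset_right Subset.rfl
  have hcomp : DiffNonneg k fun S => gameComp A B i α β (S ∩ (A.erase i ∪ B)) := by
    simp only [gameComp_inter_erase_union hAB hi]
    exact (hα.const_mul_inf_add_infDiff_mul hβ hβ_le (A.erase i)).comp (φ := insert i)
      fun S T => insert_inter_distrib S T i
  refine ⟨fun S hS => ?_, hcomp.kMonotone⟩
  simpa only [inter_eq_left.2 hS] using hcomp.nonneg S
end
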